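/- Let S_0 = I and let S_1, ..., S_K be N×N real symmetric matrices, let C be the T×T cyclic-shift (circulant) matrix, and let h_0, ..., h_K be real filter coefficients. Suppose v ∈ ℂ^N is a simultaneous eigenvector of the matrices S_1, ..., S_K with S_k v = λ_k v for each k = 1, ..., K (and set λ_0 = 1), and suppose u ∈ ℂ^T satisfies Cᵀ u = e^{jω} u for some ω ∈ ℝ. Then the generalized space-time graph filter applied to the rank-one space-time signal X = v uᵀ satisfies Σ_{k=0}^K h_k S_k S_{k-1} ⋯ S_1 S_0 X C^k = h(λ, ω) · v uᵀ, where h(λ, ω) = Σ_{k=0}^K h_k e^{jkω} ∏_{κ=0}^{k} λ_κ is the generalized frequency response of the filter. -/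

import Mathlib

open Matrix

/-- The `T × T` cyclic (one-step time) shift matrix: `C i j = 1` iff `j = i + 1 (mod T)`. -/
def cyclicShift (T : ℕ) [NeZero T] (α : Type*) [Zero α] [One α] : Matrix (Fin T) (Fin T) α :=
  Matrix.of fun i j => if j = i + 1 then 1 else 0

/-- `prodSeq S k = S_k * S_{k-1} * ⋯ * S_1 * S_0`, the backward product of a
sequence of graph shift operators. -/
def prodSeq {N : ℕ} {α : Type*} [NonAssocSemiring α] (S : ℕ → Matrix (Fin N) (Fin N) α) :
    ℕ → Matrix (Fin N) (Fin N) α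
  | 0 => S 0
  | k + 1 => S (k + 1) * prodSeq S k

/-- **Generalized STGF frequency response.**
Let `S 0 = I` and let `S 1, …, S K` be `N × N` real symmetric matrices, `C` the `T × T`
cyclic-shift matrix, and `h 0, …, h K` real filter coefficients.  If `v ∈ ℂ^N` is a
simultaneous eigenvector with `S k • v = λ k • v` for `k = 1, …, K` (and `λ 0 = 1`), and
`u ∈ ℂ^T` satisfies `Cᵀ u = e^{jω} u`, then the generalized space-time graph filter applied
to the rank-one signal `X = v uᵀ` equals `h(λ, ω) • v uᵀ` where
`h(λ, ω) = ∑_{k=0}^K h k e^{jkω} ∏_{κ=0}^{k} λ κ`. -/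
theorem generalized_stgf_frequency_response
    {N T K : ℕ} [NeZero T]
    (S : ℕ → Matrix (Fin N) (Fin N) ℝ)
    (hS0 : S 0 = 1)
    (hSsymm : ∀ k, 1 ≤ k → k ≤ K → (S k)ᵀ = S k)
    (h : ℕ → ℝ) (ω : ℝ)
    (v : Fin N → ℂ) (u : Fin T → ℂ)
    (lam : ℕ → ℂ) (hlam0 : lam 0 = 1)
    (hv : ∀ k, 1 ≤ k → k ≤ K → ((S k).map (Complex.ofReal ·)) *ᵥ v = lam k • v)
    (hu : (cyclicShift T ℂ)ᵀ *ᵥ u = Complex.exp (Complex.I * ω) • u) :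
    ∑ k ∈ Finset.range (K + 1),
        (h k : ℂ) • (prodSeq (fun κ => (S κ).map (Complex.ofReal ·)) k *
          Matrix.vecMulVec v u * (cyclicShift T ℂ) ^ k)
      = (∑ k ∈ Finset.range (K + 1),
          (h k : ℂ) * Complex.exp (Complex.I * k * ω) * ∏ κ ∈ Finset.range (k + 1), lam κ) •
        Matrix.vecMulVec v u := by
  have hP : ∀ k, k ≤ K → prodSeq (fun κ => (S κ).map (Complex.ofReal ·)) k *ᵥ v
      = (∏ κ ∈ Finset.range (k + 1), lam κ) • v := by
    intro k
    induction k with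
    | zero =>
      intro _
      have h1 : (S 0).map (Complex.ofReal ·) = (1 : Matrix (Fin N) (Fin N) ℂ) := by
        rw [hS0]
        exact Matrix.map_one _ Complex.ofReal_zero Complex.ofReal_one
      simp only [prodSeq, h1]
      simp [hlam0]
    | succ k ih =>
      intro hk
      rw [Finset.prod_range_succ, prodSeq, ← Matrix.mulVec_mulVec, ih (by omega),
        Matrix.mulVec_smul, hv (k + 1) (by omega) hk, smul_smul]
  have hC : ∀ k : ℕ, u ᵥ* (cyclicShift T ℂ) ^ k = Complex.exp (Complex.I * k * ω) • u := by
    intro k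
    induction k with
    | zero => simp
    | succ k ih =>
      rw [Matrix.mulVec_transpose] at hu
      rw [pow_succ, ← Matrix.vecMul_vecMul, ih, Matrix.smul_vecMul, hu, smul_smul,
        ← Complex.exp_add]
      congr 2
      push_cast
      ring
  rw [Finset.sum_smul]
  refine Finset.sum_congr rfl fun k hk => ?_
  have hk' : k ≤ K := by
    have := Finset.mem_range.mp hk
    omega
  rw [Matrix.mul_vecMulVec, Matrix.vecMulVec_mul, hP k hk', hC k, Matrix.smul_vecMulVec,
    Matrix.vecMulVec_smul, smul_smul, smul_smul]
  congr 1
  ring
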